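/- For every positive integer λ there is a constant C = C(a₁, a₂, λ) > 0 such that for all real x > 1 and y > 1, the number of primes p ≤ x with g_u(p−1) > y is at most C·x/((log y)^λ·log x). -/

import Mathlib

open scoped BigOperators

/-- `gu u n = gcd(n, u n)`. -/
noncomputable def gu (u : ℕ → ℤ) (n : ℕ) : ℕ := Int.gcd (n : ℤ) (u n)

/-- Rank of appearance of `m` in the sequence `u`. -/
noncomputable def zu (u : ℕ → ℤ) (m : ℕ) : ℕ := sInf {n : ℕ | 0 < n ∧ (m : ℤ) ∣ u n}

/-- `ℓ(m) = lcm(m, z_u(m))`. -/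
noncomputable def ellu (u : ℕ → ℤ) (m : ℕ) : ℕ := Nat.lcm m (zu u m)

/-- The arithmetic function `ρ_λ`. -/
noncomputable def rho (lam n : ℕ) : ℝ :=
  (Nat.factorial lam : ℝ) *
    ∑ f ∈ (Fintype.piFinset fun _ : n.primeFactors => Finset.range (lam + 1)) |>.filter
        (fun f => ∑ p, f p = lam),
      ∏ p : n.primeFactors,
        (((n.factorization (p : ℕ) : ℝ) ^ f p - ((n.factorization (p : ℕ) : ℝ) - 1) ^ f p) *
          Real.log ((p : ℕ) : ℝ) ^ f p / (Nat.factorial (f p) : ℝ))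

/-- The set of primes `≤ x`. -/
noncomputable def primesUpTo (x : ℝ) : Finset ℕ :=
  (Finset.range (⌊x⌋₊ + 1)).filter Nat.Prime

/-- `π(x)`, the number of primes `≤ x`. -/
noncomputable def primePi (x : ℝ) : ℕ := (primesUpTo x).card

/-- `π(x; b, a)`, the number of primes `p ≤ x` with `p ≡ a (mod b)`. -/
noncomputable def primePiMod (x : ℝ) (b a : ℕ) : ℕ :=
  ((primesUpTo x).filter fun p => p % b = a % b).card

/-- `Δ(x; b, a) = π(x; b, a) - π(x)/φ(b)`. -/
noncomputable def chebErr (x : ℝ) (b a : ℕ) : ℝ :=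
  (primePiMod x b a : ℝ) - (primePi x : ℝ) / (Nat.totient b : ℝ)

/-!
Let `N` be a power of `log y`, and put `g = g_u(p - 1) > y`. Either `g` has a prime factor `q ≥ N`,
and then `ℓ(q) = q * z_u(q)` divides `p - 1`; or `g` itself is an `N`-smooth divisor of `p - 1`
exceeding `y`. By a weak form of the Brun–Titchmarsh inequality, the number of primes `p ≤ x` with
`d ∣ p - 1` is `O(d ^ (δ - 1) * x / log x)` uniformly in `d`, so it remains to bound the sum of
`ℓ(q) ^ (δ - 1)` over primes `q ≥ N` and the sum of `d ^ (δ - 1)` over `N`-smooth `d > y`.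
In the first sum, the primes with `z_u(q) = t` divide `u t ≠ 0`, so there are only `O(t)` of them,
and Young's inequality separates `q` from `z_u(q)`. The second sum is handled by Rankin's trick and
an Euler product.
-/

section PrimesInProgressions

open Finset Nat

/- For a prime power `M ∣ n!`, either the prime divides `d` and `M ∣ d ^ n`, or `d` is invertible
modulo `M` and the progression becomes `d ^ n` times a product of `n` consecutive integers. -/
lemma factorial_dvd_pow_mul_prod_add_mul (a d n : ℕ) :
    n ! ∣ d ^ n * ∏ k ∈ range n, (a + k * d) := by
  rw [Nat.dvd_iff_prime_pow_dvd_dvd]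
  intro q e hq hdvd
  by_cases hqd : q ∣ d
  · have := Fact.mk hq
    have hen : e ≤ n := by
      refine ((padicValNat_dvd_iff_le (factorial_ne_zero n)).1 hdvd).trans ?_
      rcases eq_or_ne n 0 with rfl | hn
      · simp
      · exact (padicValNat_factorial_lt_of_ne_zero q hn).le
    exact ((pow_dvd_pow q hen).trans (pow_dvd_pow_of_dvd hqd n)).mul_right _
  · have hcop : d.Coprime (q ^ e) := ((hq.coprime_iff_not_dvd.2 hqd).pow_left e).symm
    have : NeZero (q ^ e) := ⟨pow_ne_zero _ hq.ne_zero⟩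
    set b : ℕ := ((d : ZMod (q ^ e))⁻¹).val
    have hb : (d : ZMod (q ^ e)) * b = 1 := by
      rw [ZMod.natCast_zmod_val, ZMod.coe_mul_inv_eq_one d hcop]
    have hasc : ((∏ k ∈ range n, (a * b + k) : ℕ) : ZMod (q ^ e)) = 0 := by
      rw [ZMod.natCast_eq_zero_iff, ← ascFactorial_eq_prod_range]
      exact hdvd.trans (factorial_dvd_ascFactorial _ _)
    have hterm (k : ℕ) : (a + k * d : ZMod (q ^ e)) = d * (a * b + k) := by
      linear_combination -(a : ZMod (q ^ e)) * hb
    refine Dvd.dvd.mul_left ?_ _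
    rw [← ZMod.natCast_eq_zero_iff]
    push_cast at hasc ⊢
    rw [prod_congr rfl fun k _ ↦ hterm k, prod_mul_distrib, hasc, mul_zero]

lemma prod_range_add_mul_le {r d : ℕ} (hrd : r ≤ d) (n : ℕ) :
    ∏ k ∈ range n, (r + k * d) ≤ n ! * d ^ n := by
  calc ∏ k ∈ range n, (r + k * d) ≤ ∏ k ∈ range n, (k + 1) * d :=
        prod_le_prod' fun k _ ↦ by linarith
    _ = n ! * d ^ n := by rw [prod_mul_distrib, prod_range_add_one_eq_factorial]; simp

lemma prod_primes_le_pow_of_mem_progression {r d n : ℕ} (hr : 0 < r) (hrd : r ≤ d) {S : Finset ℕ}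
    (hprime : ∀ p ∈ S, p.Prime) (hlt : ∀ p ∈ S, n < p) (hprog : ∀ p ∈ S, ∃ k < n, p = r + k * d) :
    ∏ p ∈ S, p ≤ d ^ (2 * n) := by
  have hcop : (∏ p ∈ S, p).Coprime n ! :=
    Nat.Coprime.prod_left fun p hp ↦
      (coprime_factorial_iff (hprime p hp).ne_one).2 ((hprime p hp).minFac_eq.symm ▸ hlt p hp)
  have hdvd : ∏ p ∈ S, p ∣ d ^ n * ∏ k ∈ range n, (r + k * d) := by
    refine prod_primes_dvd _ (fun p hp ↦ (hprime p hp).prime) fun p hp ↦ ?_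
    obtain ⟨k, hk, rfl⟩ := hprog p hp
    exact (dvd_prod_of_mem (fun k ↦ r + k * d) (mem_range.2 hk)).mul_left _
  have hpos : 0 < d ^ n * ∏ k ∈ range n, (r + k * d) :=
    Nat.mul_pos (pow_pos (hr.trans_le hrd) _) (prod_pos fun _ _ ↦ by omega)
  refine Nat.le_of_mul_le_mul_right ?_ n.factorial_pos
  calc (∏ p ∈ S, p) * n ! ≤ d ^ n * ∏ k ∈ range n, (r + k * d) :=
        Nat.le_of_dvd hpos <|
          hcop.mul_dvd_of_dvd_of_dvd hdvd (factorial_dvd_pow_mul_prod_add_mul r d n)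
    _ ≤ d ^ n * (n ! * d ^ n) := Nat.mul_le_mul_left _ (prod_range_add_mul_le hrd n)
    _ = d ^ (2 * n) * n ! := by ring

lemma card_mul_log_le_of_mem_progression {r d n : ℕ} (hr : 0 < r) (hrd : r ≤ d) {S : Finset ℕ}
    (hprime : ∀ p ∈ S, p.Prime) (hlt : ∀ p ∈ S, n < p) (hprog : ∀ p ∈ S, ∃ k < n, p = r + k * d) :
    #S * Real.log n ≤ 2 * n * Real.log d := by
  rcases eq_or_ne n 0 with rfl | hn
  · simp
  have hpow : (n : ℝ) ^ #S ≤ (d : ℝ) ^ (2 * n) := by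
    exact_mod_cast (pow_card_le_prod S (fun p ↦ p) n fun p hp ↦ (hlt p hp).le).trans
      (prod_primes_le_pow_of_mem_progression hr hrd hprime hlt hprog)
  have hlog := Real.log_le_log (by positivity) hpow
  rw [Real.log_pow, Real.log_pow] at hlog
  exact_mod_cast hlog

lemma primeCounting_mul_log_le {n : ℕ} (hn : 2 ≤ n) : primeCounting n * Real.log n ≤ 6 * n := by
  have hn' : (1 : ℝ) < n := by exact_mod_cast hn
  have hsqrt : 1 < √(n : ℝ) := by rwa [Real.lt_sqrt zero_le_one, one_pow]
  have hpi := Chebyshev.pi_le_log4_mul_div hn'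
  have hlog_sqrt : Real.log √n ≤ √n := Real.log_le_self (by positivity)
  have hlog : Real.log n = 2 * Real.log √n := by rw [Real.log_sqrt (by positivity)]; ring
  have hlog4 : Real.log 4 ≤ 2 := by
    rw [show (4 : ℝ) = 2 ^ 2 by norm_num, Real.log_pow]
    have := Real.log_two_lt_d9
    push_cast
    linarith
  have hpos : 0 < Real.log √n := Real.log_pos hsqrt
  rw [floor_natCast] at hpi
  calc primeCounting n * Real.log n
      ≤ (Real.log 4 * n / Real.log √n + √n) * (2 * Real.log √n) := by rw [hlog]; gcongr
    _ = 2 * (Real.log 4 * n) + 2 * (√n * Real.log √n) := by field_simp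
    _ ≤ 2 * (2 * n) + 2 * (√n * √n) := by gcongr
    _ = 6 * n := by rw [Real.mul_self_sqrt (by positivity)]; ring

variable {x : ℝ} {r d p : ℕ}

lemma mem_primesUpTo (hx : 0 ≤ x) : p ∈ primesUpTo x ↔ (p : ℝ) ≤ x ∧ p.Prime := by
  rw [primesUpTo, mem_filter, mem_range, Nat.lt_succ_iff, le_floor_iff hx]

lemma exists_eq_add_mul_of_mod_eq (hp : 0 < p) (hrd : r ≤ d) (hmod : p % d = r % d) :
    ∃ k, p = r + k * d := by
  have hrp : r ≤ p := by
    rcases hrd.lt_or_eq with hlt | rfl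
    · exact (mod_eq_of_lt hlt ▸ hmod) ▸ mod_le p d
    · exact le_of_dvd hp (dvd_of_mod_eq_zero (by simpa using hmod))
  obtain ⟨k, hk⟩ := (modEq_iff_dvd' hrp).1 hmod.symm
  exact ⟨k, by rw [mul_comm, ← hk]; omega⟩

lemma exists_lt_floor_of_mem_progression (hx : 0 ≤ x) (hr : 0 < r) (hrd : r ≤ d)
    (hp : p ∈ primesUpTo x) (hmod : p % d = r % d) :
    ∃ k < ⌊x / d⌋₊ + 1, p = r + k * d := by
  obtain ⟨hpx, hprime⟩ := (mem_primesUpTo hx).1 hp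
  obtain ⟨k, rfl⟩ := exists_eq_add_mul_of_mod_eq hprime.pos hrd hmod
  have hd : (0 : ℝ) < d := by exact_mod_cast hr.trans_le hrd
  refine ⟨k, Nat.lt_succ_iff.2 (le_floor ?_), rfl⟩
  rw [le_div_iff₀ hd]
  push_cast at hpx
  linarith [(cast_nonneg r : (0 : ℝ) ≤ r)]

lemma primePiMod_le_floor (hx : 0 ≤ x) (hr : 0 < r) (hrd : r ≤ d) :
    primePiMod x d r ≤ ⌊x / d⌋₊ + 1 := by
  have hsub : {p ∈ primesUpTo x | p % d = r % d} ⊆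
      (range (⌊x / d⌋₊ + 1)).image fun k ↦ r + k * d := by
    intro p hp
    obtain ⟨hpx, hmod⟩ := mem_filter.1 hp
    obtain ⟨k, hk, rfl⟩ := exists_lt_floor_of_mem_progression hx hr hrd hpx hmod
    exact mem_image_of_mem _ (mem_range.2 hk)
  exact ((card_le_card hsub).trans card_image_le).trans_eq (card_range _)

lemma primePiMod_mul_log_floor_le (hd : (d : ℝ) ≤ x) (hr : 0 < r) (hrd : r ≤ d) :
    primePiMod x d r * Real.log (⌊x / d⌋₊ + 1 : ℕ) ≤
      (⌊x / d⌋₊ + 1 : ℕ) * (6 + 2 * Real.log d) := by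
  have hd0 : (0 : ℝ) < d := by exact_mod_cast hr.trans_le hrd
  have hx : 0 ≤ x := hd0.le.trans hd
  have hn : 2 ≤ ⌊x / d⌋₊ + 1 := by
    have : 1 ≤ ⌊x / d⌋₊ := le_floor (by rwa [cast_one, one_le_div₀ hd0])
    omega
  set n := ⌊x / d⌋₊ + 1
  set T := {p ∈ primesUpTo x | p % d = r % d} with hT
  have hsmall : #{p ∈ T | p ≤ n} ≤ primeCounting n := by
    rw [primeCounting, primeCounting', count_eq_card_filter_range]
    refine card_le_card fun p hp ↦ ?_
    simp only [hT, mem_filter, mem_primesUpTo hx] at hp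
    exact mem_filter.2 ⟨mem_range.2 (by omega), hp.1.1.2⟩
  have hlarge : #{p ∈ T | ¬ p ≤ n} * Real.log n ≤ 2 * n * Real.log d := by
    have hmem {p : ℕ} (hp : p ∈ T.filter (¬ · ≤ n)) :
        (p ∈ primesUpTo x ∧ p % d = r % d) ∧ n < p := by
      simpa only [hT, mem_filter, not_le] using hp
    exact card_mul_log_le_of_mem_progression hr hrd
      (fun p hp ↦ ((mem_primesUpTo hx).1 (hmem hp).1.1).2) (fun p hp ↦ (hmem hp).2)
      fun p hp ↦ exists_lt_floor_of_mem_progression hx hr hrd (hmem hp).1.1 (hmem hp).1.2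
  have hsplit : (primePiMod x d r : ℝ) = #{p ∈ T | p ≤ n} + #{p ∈ T | ¬ p ≤ n} := by
    exact_mod_cast (card_filter_add_card_filter_not _).symm
  calc primePiMod x d r * Real.log n
      = #{p ∈ T | p ≤ n} * Real.log n + #{p ∈ T | ¬ p ≤ n} * Real.log n := by
        rw [hsplit, add_mul]
    _ ≤ primeCounting n * Real.log n + 2 * n * Real.log d := by gcongr
    _ ≤ 6 * n + 2 * n * Real.log d := by linarith [primeCounting_mul_log_le hn]
    _ = n * (6 + 2 * Real.log d) := by ring

/- A weak Brun–Titchmarsh inequality: the factor `1 + log d` replaces `d / φ(d)`, which makes it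
elementary. -/
lemma primePiMod_le (hx : 1 < x) (hd : (d : ℝ) ≤ x) (hr : 0 < r) (hrd : r ≤ d) :
    primePiMod x d r ≤ 24 * (1 + Real.log d) * (x / (d * Real.log x)) := by
  have hd1 : (1 : ℝ) ≤ d := by exact_mod_cast hr.trans_le hrd
  have hx0 : 0 < x := zero_lt_one.trans hx
  have hlogx : 0 < Real.log x := Real.log_pos hx
  have hlogd : 0 ≤ Real.log d := Real.log_nonneg hd1
  have hxd : 1 ≤ x / d := (one_le_div₀ (by linarith)).2 hd
  have hn_le : ((⌊x / d⌋₊ + 1 : ℕ) : ℝ) ≤ 2 * (x / d) := by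
    have := floor_le (zero_le_one.trans hxd)
    push_cast
    linarith
  have hmul_log : primePiMod x d r * Real.log x ≤ (x / d) * (24 * (1 + Real.log d)) := by
    rcases le_total (Real.log x) (2 * Real.log d) with hlarge | hsmall
    · have hcard : (primePiMod x d r : ℝ) ≤ 2 * (x / d) :=
        le_trans (by exact_mod_cast primePiMod_le_floor hx0.le hr hrd) hn_le
      calc primePiMod x d r * Real.log x ≤ 2 * (x / d) * (2 * Real.log d) := by gcongr
        _ ≤ (x / d) * (24 * (1 + Real.log d)) := by nlinarith
    · have hlog : Real.log x ≤ 2 * Real.log (⌊x / d⌋₊ + 1 : ℕ) := by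
        have := Real.log_le_log (zero_lt_one.trans_le hxd) (lt_floor_add_one (x / d)).le
        rw [Real.log_div hx0.ne' (by linarith)] at this
        push_cast
        linarith
      calc primePiMod x d r * Real.log x
          ≤ primePiMod x d r * (2 * Real.log (⌊x / d⌋₊ + 1 : ℕ)) := by gcongr
        _ ≤ 2 * ((⌊x / d⌋₊ + 1 : ℕ) * (6 + 2 * Real.log d)) := by
          linarith [primePiMod_mul_log_floor_le hd hr hrd]
        _ ≤ 2 * (2 * (x / d) * (6 + 2 * Real.log d)) := by gcongr
        _ ≤ (x / d) * (24 * (1 + Real.log d)) := by nlinarith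
  calc (primePiMod x d r : ℝ) ≤ (x / d) * (24 * (1 + Real.log d)) / Real.log x :=
        (le_div_iff₀ hlogx).2 hmul_log
    _ = 24 * (1 + Real.log d) * (x / (d * Real.log x)) := by field_simp

lemma mod_eq_one_mod_iff_dvd_sub_one (hp : 0 < p) : p % d = 1 % d ↔ d ∣ p - 1 := by
  rw [eq_comm]
  exact modEq_iff_dvd' hp

lemma primePiMod_one_eq_zero (hx : 0 ≤ x) (hd : d = 0 ∨ x < d) : primePiMod x d 1 = 0 := by
  rw [primePiMod, Finset.card_eq_zero, filter_eq_empty_iff]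
  intro p hp hmod
  obtain ⟨hpx, hprime⟩ := (mem_primesUpTo hx).1 hp
  have hp2 := hprime.two_le
  have hdvd := (mod_eq_one_mod_iff_dvd_sub_one hprime.pos).1 hmod
  rcases hd with rfl | hxd
  · have := zero_dvd_iff.1 hdvd
    omega
  · have hlt : p < d := by exact_mod_cast hpx.trans_lt hxd
    have := le_of_dvd (by omega) hdvd
    omega

lemma exists_primePiMod_one_le {δ : ℝ} (hδ : 0 < δ) :
    ∃ C : ℝ, 0 < C ∧ ∀ x : ℝ, 1 < x → ∀ d : ℕ,
      (primePiMod x d 1 : ℝ) ≤ C * (x / Real.log x) * (d : ℝ) ^ (δ - 1) := by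
  refine ⟨24 * (1 + 1 / δ), by positivity, fun x hx d ↦ ?_⟩
  have hlogx : 0 < Real.log x := Real.log_pos hx
  by_cases hd : d = 0 ∨ x < d
  · rw [primePiMod_one_eq_zero (by linarith) hd, cast_zero]
    positivity
  obtain ⟨hd0, hdx⟩ := not_or.1 hd
  have hd1 : (1 : ℝ) ≤ d := by exact_mod_cast one_le_iff_ne_zero.2 hd0
  have hlog : 1 + Real.log d ≤ (1 + 1 / δ) * (d : ℝ) ^ δ := by
    have hle := Real.log_le_rpow_div (zero_le_one.trans hd1) hδ
    have hone := Real.one_le_rpow hd1 hδ.le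
    calc 1 + Real.log d ≤ (d : ℝ) ^ δ + (d : ℝ) ^ δ / δ := add_le_add hone hle
      _ = (1 + 1 / δ) * (d : ℝ) ^ δ := by ring
  calc (primePiMod x d 1 : ℝ) ≤ 24 * (1 + Real.log d) * (x / (d * Real.log x)) :=
        primePiMod_le hx (not_lt.1 hdx) one_pos (one_le_iff_ne_zero.2 hd0)
    _ ≤ 24 * ((1 + 1 / δ) * (d : ℝ) ^ δ) * (x / (d * Real.log x)) := by gcongr
    _ = 24 * (1 + 1 / δ) * (x / Real.log x) * (d : ℝ) ^ (δ - 1) := by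
      rw [Real.rpow_sub_one (by positivity)]
      field_simp

end PrimesInProgressions

section LucasSequences

/-- `u` is the Lucas sequence of the first kind with parameters `a` and `b`; its characteristic
polynomial is `X² - a X - b`, with discriminant `a² + 4 b`. -/
structure IsLucasSeq {R : Type*} [CommRing R] (a b : R) (u : ℕ → R) : Prop where
  zero : u 0 = 0
  one : u 1 = 1
  add_two (n : ℕ) : u (n + 2) = a * u (n + 1) + b * u n

namespace IsLucasSeq

lemma map {R S : Type*} [CommRing R] [CommRing S] {a b : R} {u : ℕ → R} (h : IsLucasSeq a b u)
    (f : R →+* S) : IsLucasSeq (f a) (f b) fun n ↦ f (u n) where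
  zero := by rw [h.zero, map_zero]
  one := by rw [h.one, map_one]
  add_two n := by rw [h.add_two, map_add, map_mul, map_mul]

lemma mul_sub_eq_pow_sub_pow {R : Type*} [CommRing R] {α β : R} {u : ℕ → R}
    (h : IsLucasSeq (α + β) (-(α * β)) u) (n : ℕ) : u n * (α - β) = α ^ n - β ^ n := by
  induction n using Nat.twoStepInduction with
  | zero => simp [h.zero]
  | one => simp [h.one]
  | more n ih ih' =>
    rw [h.add_two]
    linear_combination (α + β) * ih' - α * β * ih

lemma exists_eq_zero_iff_div_pow_eq_one {K : Type*} [Field K] [IsAlgClosed K] {a b : K}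
    {u : ℕ → K} (h : IsLucasSeq a b u) (hb : b ≠ 0) (hΔ : a ^ 2 + 4 * b ≠ 0) :
    ∃ α β : K, α ^ 2 = a * α + b ∧ β ^ 2 = a * β + b ∧ α ≠ β ∧
      ∀ n, u n = 0 ↔ (α / β) ^ n = 1 := by
  obtain ⟨α, hα⟩ := IsAlgClosed.exists_root (.X ^ 2 - .C a * .X - .C b : Polynomial K) (by
    rw [show (.X ^ 2 - .C a * .X - .C b : Polynomial K).degree = 2 by compute_degree!]
    exact two_ne_zero)
  simp only [Polynomial.IsRoot, Polynomial.eval_sub, Polynomial.eval_pow, Polynomial.eval_X,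
    Polynomial.eval_mul, Polynomial.eval_C] at hα
  obtain ⟨β, rfl⟩ : ∃ β, a = α + β := ⟨a - α, by ring⟩
  obtain rfl : b = -(α * β) := by linear_combination -hα
  have hβ : β ≠ 0 := by
    rintro rfl
    simp at hb
  have hne : α ≠ β := by
    rintro rfl
    exact hΔ (by ring)
  refine ⟨α, β, by ring, by ring, hne, fun n ↦ ?_⟩
  rw [div_pow, div_eq_one_iff_eq (pow_ne_zero n hβ), ← sub_eq_zero (a := α ^ n),
    ← h.mul_sub_eq_pow_sub_pow n, mul_eq_zero, or_iff_left (sub_ne_zero.2 hne)]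

variable {a b : ℤ} {u : ℕ → ℤ}

lemma ne_zero_of_nondegenerate (h : IsLucasSeq a b u) (hb : b ≠ 0) (hΔ : a ^ 2 + 4 * b ≠ 0)
    (hnd : ∀ α β : ℂ, α ^ 2 = (a : ℂ) * α + (b : ℂ) → β ^ 2 = (a : ℂ) * β + (b : ℂ) → α ≠ β →
      ∀ k : ℕ, 0 < k → (α / β) ^ k ≠ 1) {n : ℕ} (hn : 0 < n) : u n ≠ 0 := by
  obtain ⟨α, β, hα, hβ, hne, hzero⟩ := (h.map (Int.castRingHom ℂ)).exists_eq_zero_iff_div_pow_eq_one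
    (Int.cast_ne_zero.2 hb) (by simpa using (by exact_mod_cast hΔ : (a : ℂ) ^ 2 + 4 * b ≠ 0))
  intro h0
  exact hnd α β hα hβ hne n hn ((hzero n).1 (by simp [h0]))

lemma natAbs_le_two_pow (h : IsLucasSeq a b u) (n : ℕ) :
    (u n).natAbs ≤ 2 ^ ((a.natAbs + b.natAbs) * n) := by
  set K := a.natAbs + b.natAbs with hK
  induction n using Nat.twoStepInduction with
  | zero => simp [h.zero]
  | one => simpa [h.one] using Nat.one_le_two_pow
  | more n ih ih' =>
    have hmono : 2 ^ (K * n) ≤ 2 ^ (K * (n + 1)) := Nat.pow_le_pow_right two_pos (by gcongr; omega)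
    calc (u (n + 2)).natAbs ≤ a.natAbs * (u (n + 1)).natAbs + b.natAbs * (u n).natAbs := by
          rw [h.add_two, ← Int.natAbs_mul, ← Int.natAbs_mul]
          exact Int.natAbs_add_le _ _
      _ ≤ a.natAbs * 2 ^ (K * (n + 1)) + b.natAbs * 2 ^ (K * (n + 1)) := by
          gcongr
          exact ih.trans hmono
      _ = K * 2 ^ (K * (n + 1)) := by rw [hK]; ring
      _ ≤ 2 ^ K * 2 ^ (K * (n + 1)) := by gcongr; exact Nat.lt_two_pow_self.le
      _ = 2 ^ (K * (n + 2)) := by ring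

end IsLucasSeq

end LucasSequences

section RankOfAppearance

variable {u : ℕ → ℤ}

lemma natCast_dvd_apply_zu {m : ℕ} (hm : zu u m ≠ 0) : (m : ℤ) ∣ u (zu u m) :=
  (Nat.sInf_mem (Nat.nonempty_of_pos_sInf (Nat.pos_of_ne_zero hm))).2

lemma zu_eq_of_forall_dvd_iff {m z : ℕ} (h : ∀ n, (m : ℤ) ∣ u n ↔ z ∣ n) : zu u m = z := by
  simp only [zu, h]
  rcases Nat.eq_zero_or_pos z with rfl | hz
  · rw [Nat.sInf_eq_zero]
    right
    ext n
    simp only [zero_dvd_iff, Set.mem_ofPred_eq, Set.mem_empty_iff_false, iff_false]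
    omega
  · exact le_antisymm (Nat.sInf_le ⟨hz, dvd_rfl⟩)
      (le_csInf ⟨z, hz, dvd_rfl⟩ fun n hn ↦ Nat.le_of_dvd hn.1 hn.2)

lemma card_primeFactors_le_of_le_two_pow {m e : ℕ} (hm : m ≠ 0) (hle : m ≤ 2 ^ e) :
    m.primeFactors.card ≤ e := by
  refine (Nat.pow_le_pow_iff_right one_lt_two).1 ?_
  calc 2 ^ m.primeFactors.card ≤ ∏ p ∈ m.primeFactors, p :=
        Finset.pow_card_le_prod _ _ _ fun p hp ↦ (Nat.prime_of_mem_primeFactors hp).two_le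
    _ ≤ m := Nat.le_of_dvd (Nat.pos_of_ne_zero hm) (Nat.prod_primeFactors_dvd m)
    _ ≤ 2 ^ e := hle

namespace IsLucasSeq

variable {a b : ℤ}

/- `ζ` is the ratio of the two characteristic roots. Infinite order is encoded as `orderOf ζ = 0`,
in accordance with `sInf ∅ = 0` in `zu`. -/
lemma exists_orderOf_eq_zu (h : IsLucasSeq a b u) (K : Type*) [Field K] [IsAlgClosed K] (q : ℕ)
    [CharP K q] (hq : ¬ (q : ℤ) ∣ b * (a ^ 2 + 4 * b)) :
    ∃ ζ : K, orderOf ζ = zu u q ∧ ∀ n, (q : ℤ) ∣ u n ↔ ζ ^ n = 1 := by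
  have hcast (c : ℤ) : (c : K) = 0 ↔ (q : ℤ) ∣ c := CharP.intCast_eq_zero_iff K q c
  have hb : (b : K) ≠ 0 := fun h0 ↦ hq (((hcast b).1 h0).mul_right _)
  have hΔ : (a : K) ^ 2 + 4 * b ≠ 0 := fun h0 ↦
    hq (((hcast (a ^ 2 + 4 * b)).1 (by push_cast; exact h0)).mul_left _)
  obtain ⟨α, β, -, -, -, hzero⟩ :=
    (h.map (Int.castRingHom K)).exists_eq_zero_iff_div_pow_eq_one hb hΔ
  have hdvd (n : ℕ) : (q : ℤ) ∣ u n ↔ (α / β) ^ n = 1 := by rw [← hzero, ← hcast]; rfl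
  refine ⟨α / β, (zu_eq_of_forall_dvd_iff fun n ↦ ?_).symm, hdvd⟩
  rw [hdvd, orderOf_dvd_iff_pow_eq_one]

lemma natCast_dvd_iff_zu_dvd (h : IsLucasSeq a b u) {q : ℕ} (hq : q.Prime)
    (hq' : ¬ (q : ℤ) ∣ b * (a ^ 2 + 4 * b)) (n : ℕ) : (q : ℤ) ∣ u n ↔ zu u q ∣ n := by
  have := Fact.mk hq
  obtain ⟨ζ, hord, hdvd⟩ := h.exists_orderOf_eq_zu (AlgebraicClosure (ZMod q)) q hq'
  rw [hdvd, ← hord, orderOf_dvd_iff_pow_eq_one]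

lemma ellu_eq_mul (h : IsLucasSeq a b u) {q : ℕ} (hq : q.Prime)
    (hq' : ¬ (q : ℤ) ∣ b * (a ^ 2 + 4 * b)) : ellu u q = q * zu u q := by
  have := Fact.mk hq
  have := ExpChar.prime (R := AlgebraicClosure (ZMod q)) hq
  obtain ⟨ζ, hord, -⟩ := h.exists_orderOf_eq_zu (AlgebraicClosure (ZMod q)) q hq'
  rcases eq_or_ne (zu u q) 0 with hz | hz
  · rw [ellu, hz, Nat.lcm_zero_right, mul_zero]
  refine Nat.Coprime.lcm_eq_mul (hq.coprime_iff_not_dvd.2 fun ⟨m, hm⟩ ↦ ?_)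
  have hζm : ζ ^ m = 1 := by
    rw [← ExpChar.pow_prime_pow_mul_eq_one_iff q 1 m ζ, pow_one, ← hm, ← hord, pow_orderOf_eq_one]
  have hmpos : 0 < m := Nat.pos_of_ne_zero fun h0 ↦ hz (by rw [hm, h0, mul_zero])
  have hle : q * m ≤ 1 * m := by
    simpa [← hm, ← hord] using orderOf_le_of_pow_eq_one hmpos hζm
  exact hq.one_lt.not_ge (Nat.le_of_mul_le_mul_right hle hmpos)

lemma ellu_dvd_of_dvd_gu (h : IsLucasSeq a b u) {q : ℕ} (hq : q.Prime)
    (hq' : ¬ (q : ℤ) ∣ b * (a ^ 2 + 4 * b)) {n : ℕ} (hdvd : q ∣ gu u n) : ellu u q ∣ n := by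
  have hgcd : (q : ℤ) ∣ Int.gcd n (u n) := Int.natCast_dvd_natCast.2 hdvd
  obtain ⟨hn, hun⟩ := Int.dvd_coe_gcd_iff.1 hgcd
  exact Nat.lcm_dvd (Int.natCast_dvd_natCast.1 hn) ((h.natCast_dvd_iff_zu_dvd hq hq' n).1 hun)

lemma card_filter_zu_eq_le (h : IsLucasSeq a b u) {Q : Finset ℕ} (hQ : ∀ q ∈ Q, q.Prime) {t : ℕ}
    (ht : 0 < t) (hut : u t ≠ 0) :
    (Q.filter fun q ↦ zu u q = t).card ≤ (a.natAbs + b.natAbs) * t := by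
  have hut' : (u t).natAbs ≠ 0 := Int.natAbs_ne_zero.2 hut
  refine (Finset.card_le_card fun q hq ↦ ?_).trans
    (card_primeFactors_le_of_le_two_pow hut' (h.natAbs_le_two_pow t))
  obtain ⟨hqQ, rfl⟩ := Finset.mem_filter.1 hq
  exact Nat.mem_primeFactors.2 ⟨hQ q hqQ, Int.natCast_dvd.1 (natCast_dvd_apply_zu ht.ne'), hut'⟩

end IsLucasSeq

end RankOfAppearance

section Sums

open Finset

lemma mul_rpow_neg_le {a b : ℝ} (ha : 0 ≤ a) (hb : 0 ≤ b) (s : ℝ) :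
    (a * b) ^ (-s) ≤ a ^ (-(3 / 2 * s)) + b ^ (-(3 * s)) := by
  have hyoung := Real.young_inequality_of_nonneg (Real.rpow_nonneg ha (-s))
    (Real.rpow_nonneg hb (-s)) (p := 3 / 2) (q := 3) ⟨by norm_num, by norm_num, by norm_num⟩
  rw [← Real.rpow_mul ha, ← Real.rpow_mul hb] at hyoung
  calc (a * b) ^ (-s) = a ^ (-s) * b ^ (-s) := Real.mul_rpow ha hb
    _ ≤ a ^ (-s * (3 / 2)) / (3 / 2) + b ^ (-s * 3) / 3 := hyoung
    _ ≤ a ^ (-s * (3 / 2)) + b ^ (-s * 3) := by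
      gcongr <;> exact div_le_self (by positivity) (by norm_num)
    _ = a ^ (-(3 / 2 * s)) + b ^ (-(3 * s)) := by ring_nf

lemma sum_rpow_le_tsum {r : ℝ} (hr : r < -1) (Q : Finset ℕ) :
    ∑ q ∈ Q, (q : ℝ) ^ r ≤ ∑' n : ℕ, (n : ℝ) ^ r :=
  (Real.summable_nat_rpow.2 hr).sum_le_tsum Q fun _ _ ↦ by positivity

lemma sum_comp_rpow_le {α : Type*} {r K : ℝ} (hr : r < -2) (hK : 0 ≤ K) {Q : Finset α} {z : α → ℕ}
    (hz : ∀ t, 0 < t → (#{q ∈ Q | z q = t} : ℝ) ≤ K * t) :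
    ∑ q ∈ Q, (z q : ℝ) ^ r ≤ K * ∑' n : ℕ, (n : ℝ) ^ (r + 1) := by
  have hterm (t : ℕ) : #{q ∈ Q | z q = t} • (t : ℝ) ^ r ≤ K * (t : ℝ) ^ (r + 1) := by
    rcases t.eq_zero_or_pos with rfl | ht
    · simp [Real.zero_rpow (by linarith : r ≠ 0), Real.zero_rpow (by linarith : r + 1 ≠ 0)]
    · have ht' : (t : ℝ) ≠ 0 := by exact_mod_cast ht.ne'
      rw [nsmul_eq_mul, Real.rpow_add_one ht', mul_comm ((t : ℝ) ^ r), ← mul_assoc]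
      gcongr
      exact hz t ht
  rw [sum_comp (fun t : ℕ ↦ (t : ℝ) ^ r) z]
  calc ∑ t ∈ Q.image z, #{q ∈ Q | z q = t} • (t : ℝ) ^ r
      ≤ ∑ t ∈ Q.image z, K * (t : ℝ) ^ (r + 1) := sum_le_sum fun t _ ↦ hterm t
    _ = K * ∑ t ∈ Q.image z, (t : ℝ) ^ (r + 1) := (mul_sum ..).symm
    _ ≤ K * ∑' n : ℕ, (n : ℝ) ^ (r + 1) := by
      gcongr
      exact sum_rpow_le_tsum (by linarith) _

-- The Hölder exponents `3 / 2` and `3` are those for which both series on the right converge as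
-- soon as `2 / 3 < s`.
lemma sum_mul_rpow_neg_le {s K : ℝ} (hs : 2 / 3 < s) (hK : 0 ≤ K) {Q : Finset ℕ} {z : ℕ → ℕ}
    (hz : ∀ t, 0 < t → (#{q ∈ Q | z q = t} : ℝ) ≤ K * t) :
    ∑ q ∈ Q, (q * z q : ℝ) ^ (-s) ≤
      ∑' n : ℕ, (n : ℝ) ^ (-(3 / 2 * s)) + K * ∑' n : ℕ, (n : ℝ) ^ (-(3 * s) + 1) := by
  calc ∑ q ∈ Q, (q * z q : ℝ) ^ (-s)
      ≤ ∑ q ∈ Q, ((q : ℝ) ^ (-(3 / 2 * s)) + (z q : ℝ) ^ (-(3 * s))) :=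
        sum_le_sum fun q _ ↦ mul_rpow_neg_le q.cast_nonneg (z q).cast_nonneg s
    _ = ∑ q ∈ Q, (q : ℝ) ^ (-(3 / 2 * s)) + ∑ q ∈ Q, (z q : ℝ) ^ (-(3 * s)) := sum_add_distrib
    _ ≤ _ := add_le_add (sum_rpow_le_tsum (by linarith) Q) (sum_comp_rpow_le (by linarith) hK hz)

end Sums

section LargePrimes

open Finset

variable {a b : ℤ} {u : ℕ → ℤ}

lemma IsLucasSeq.exists_sum_ellu_rpow_le (h : IsLucasSeq a b u) (hu : ∀ n, 0 < n → u n ≠ 0)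
    {s : ℝ} (hs : 2 / 3 < s) :
    ∃ B : ℝ, 0 ≤ B ∧ ∀ Q : Finset ℕ, (∀ q ∈ Q, q.Prime ∧ ¬ (q : ℤ) ∣ b * (a ^ 2 + 4 * b)) →
      ∑ q ∈ Q, (ellu u q : ℝ) ^ (-s) ≤ B := by
  refine ⟨∑' n : ℕ, (n : ℝ) ^ (-(3 / 2 * s)) +
    (a.natAbs + b.natAbs : ℕ) * ∑' n : ℕ, (n : ℝ) ^ (-(3 * s) + 1), by positivity, fun Q hQ ↦ ?_⟩
  have hellu (q : ℕ) (hq : q ∈ Q) : (ellu u q : ℝ) ^ (-s) = (q * zu u q : ℝ) ^ (-s) := by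
    rw [h.ellu_eq_mul (hQ q hq).1 (hQ q hq).2, Nat.cast_mul]
  rw [sum_congr rfl hellu]
  refine sum_mul_rpow_neg_le hs (Nat.cast_nonneg _) fun t ht ↦ ?_
  exact_mod_cast h.card_filter_zu_eq_le (fun q hq ↦ (hQ q hq).1) ht (hu t ht)

lemma rpow_neg_add_le {m N : ℕ} {s ε : ℝ} (hs : 0 < s) (hε : 0 ≤ ε) (hN : 0 < N)
    (hm : m = 0 ∨ N ≤ m) : (m : ℝ) ^ (-(s + ε)) ≤ (N : ℝ) ^ (-ε) * (m : ℝ) ^ (-s) := by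
  rcases eq_or_ne m 0 with rfl | hm0
  · rw [Nat.cast_zero, Real.zero_rpow (by linarith), Real.zero_rpow (by linarith), mul_zero]
  have hNm : (N : ℝ) ≤ m := by exact_mod_cast hm.resolve_left hm0
  have hN' : (0 : ℝ) < N := by exact_mod_cast hN
  rw [neg_add', sub_eq_neg_add, Real.rpow_add (hN'.trans_le hNm)]
  gcongr ?_ * _
  exact Real.rpow_le_rpow_of_nonpos hN' hNm (neg_nonpos.2 hε)

lemma ellu_eq_zero_or_le (u : ℕ → ℤ) (m : ℕ) : ellu u m = 0 ∨ m ≤ ellu u m :=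
  (ellu u m).eq_zero_or_pos.imp_right fun hpos ↦ Nat.le_of_dvd hpos (Nat.dvd_lcm_left m _)

lemma natCast_not_dvd_of_natAbs_lt {m : ℤ} {q : ℕ} (hm : m ≠ 0) (hq : m.natAbs < q) :
    ¬ (q : ℤ) ∣ m :=
  fun hdvd ↦ hm (Int.eq_zero_of_dvd_of_natAbs_lt_natAbs hdvd hq)

lemma IsLucasSeq.exists_sum_ellu_rpow_tail_le (h : IsLucasSeq a b u) (hb : b ≠ 0)
    (hΔ : a ^ 2 + 4 * b ≠ 0) (hu : ∀ n, 0 < n → u n ≠ 0) {s ε : ℝ} (hs : 2 / 3 < s) (hε : 0 ≤ ε) :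
    ∃ B : ℝ, 0 ≤ B ∧ ∀ N : ℕ, (b * (a ^ 2 + 4 * b)).natAbs < N → ∀ Q : Finset ℕ,
      (∀ q ∈ Q, q.Prime) → (∀ q ∈ Q, N ≤ q) →
      ∑ q ∈ Q, (ellu u q : ℝ) ^ (-(s + ε)) ≤ B * (N : ℝ) ^ (-ε) := by
  obtain ⟨B, hB, hsum⟩ := h.exists_sum_ellu_rpow_le hu hs
  refine ⟨B, hB, fun N hN Q hQ hNQ ↦ ?_⟩
  have hndvd (q : ℕ) (hq : q ∈ Q) : ¬ (q : ℤ) ∣ b * (a ^ 2 + 4 * b) :=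
    natCast_not_dvd_of_natAbs_lt (mul_ne_zero hb hΔ) (hN.trans_le (hNQ q hq))
  calc ∑ q ∈ Q, (ellu u q : ℝ) ^ (-(s + ε))
      ≤ ∑ q ∈ Q, (N : ℝ) ^ (-ε) * (ellu u q : ℝ) ^ (-s) :=
        sum_le_sum fun q hq ↦ rpow_neg_add_le (by linarith) hε (Nat.zero_lt_of_lt hN)
          ((ellu_eq_zero_or_le u q).imp_right (hNQ q hq).trans)
    _ = (∑ q ∈ Q, (ellu u q : ℝ) ^ (-s)) * (N : ℝ) ^ (-ε) := by rw [← mul_sum, mul_comm]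
    _ ≤ B * (N : ℝ) ^ (-ε) := by
      gcongr
      exact hsum Q fun q hq ↦ ⟨hQ q hq, hndvd q hq⟩

end LargePrimes

section SmoothNumbers

open Finset Filter Topology

lemma sum_rpow_neg_le_prod_primesBelow {θ : ℝ} (hθ : 0 < θ) {N : ℕ} {D : Finset ℕ}
    (hD : ∀ d ∈ D, d ∈ N.smoothNumbers) :
    ∑ d ∈ D, (d : ℝ) ^ (-θ) ≤ ∏ p ∈ N.primesBelow, (1 - (p : ℝ) ^ (-θ))⁻¹ := by
  let f : ℕ →* ℝ :=
    { toFun n := (n : ℝ) ^ (-θ)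
      map_one' := by simp
      map_mul' m n := by rw [Nat.cast_mul, Real.mul_rpow m.cast_nonneg n.cast_nonneg] }
  have hf {p : ℕ} (hp : p.Prime) : ‖f p‖ < 1 := by
    change ‖(p : ℝ) ^ (-θ)‖ < 1
    rw [Real.norm_of_nonneg (Real.rpow_nonneg p.cast_nonneg _)]
    exact Real.rpow_lt_one_of_one_lt_of_neg (by exact_mod_cast hp.one_lt) (neg_neg_of_pos hθ)
  have hsum := (EulerProduct.summable_and_hasSum_smoothNumbers_prod_primesBelow_geometric hf N).2
  calc ∑ d ∈ D, (d : ℝ) ^ (-θ) = ∑ d ∈ D.subtype (· ∈ N.smoothNumbers), f d :=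
        (sum_subtype_of_mem f hD).symm
    _ ≤ _ := sum_le_hasSum _ (fun d _ ↦ Real.rpow_nonneg (Nat.cast_nonneg (d : ℕ)) _) hsum

lemma inv_one_sub_le_exp {t τ : ℝ} (ht : 0 ≤ t) (htτ : t ≤ τ) (hτ : τ < 1) :
    (1 - t)⁻¹ ≤ Real.exp ((1 - τ)⁻¹ * t) := by
  have : 0 < 1 - τ := by linarith
  have : 1 - t ≠ 0 := by linarith
  calc (1 - t)⁻¹ = (1 - t)⁻¹ * t + 1 := by field_simp; ring
    _ ≤ (1 - τ)⁻¹ * t + 1 := by gcongr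
    _ ≤ Real.exp ((1 - τ)⁻¹ * t) := Real.add_one_le_exp _

lemma sum_primesBelow_rpow_neg_le {θ σ : ℝ} (hσ : 0 ≤ σ) (hθσ : 1 < θ + σ) (N : ℕ) :
    ∑ p ∈ N.primesBelow, (p : ℝ) ^ (-θ) ≤ (∑' n : ℕ, (n : ℝ) ^ (-(θ + σ))) * (N : ℝ) ^ σ := by
  have hterm (p : ℕ) (hp : p ∈ N.primesBelow) :
      (p : ℝ) ^ (-θ) ≤ (p : ℝ) ^ (-(θ + σ)) * (N : ℝ) ^ σ := by
    have hp0 : (0 : ℝ) < p := by exact_mod_cast (Nat.prime_of_mem_primesBelow hp).pos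
    have hpN : (p : ℝ) ≤ N := by exact_mod_cast (Nat.lt_of_mem_primesBelow hp).le
    calc (p : ℝ) ^ (-θ) = (p : ℝ) ^ (-(θ + σ)) * (p : ℝ) ^ σ := by
          rw [← Real.rpow_add hp0]; ring_nf
      _ ≤ (p : ℝ) ^ (-(θ + σ)) * (N : ℝ) ^ σ := by gcongr
  calc ∑ p ∈ N.primesBelow, (p : ℝ) ^ (-θ)
      ≤ ∑ p ∈ N.primesBelow, (p : ℝ) ^ (-(θ + σ)) * (N : ℝ) ^ σ := sum_le_sum hterm
    _ = (∑ p ∈ N.primesBelow, (p : ℝ) ^ (-(θ + σ))) * (N : ℝ) ^ σ := (sum_mul ..).symm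
    _ ≤ _ := by gcongr; exact sum_rpow_le_tsum (by linarith) _

lemma exists_sum_smooth_rpow_neg_le_exp {θ σ : ℝ} (hθ : 0 < θ) (hσ : 0 ≤ σ) (hθσ : 1 < θ + σ) :
    ∃ C : ℝ, 0 ≤ C ∧ ∀ (N : ℕ) (D : Finset ℕ), (∀ d ∈ D, d ∈ N.smoothNumbers) →
      ∑ d ∈ D, (d : ℝ) ^ (-θ) ≤ Real.exp (C * (N : ℝ) ^ σ) := by
  have hτ : (2 : ℝ) ^ (-θ) < 1 :=
    Real.rpow_lt_one_of_one_lt_of_neg one_lt_two (neg_neg_of_pos hθ)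
  set c : ℝ := (1 - 2 ^ (-θ))⁻¹
  have : 0 ≤ c := inv_nonneg.2 (by linarith)
  refine ⟨c * ∑' n : ℕ, (n : ℝ) ^ (-(θ + σ)), by positivity, fun N D hD ↦ ?_⟩
  have hfactor (p : ℕ) (hp : p ∈ N.primesBelow) :
      (1 - (p : ℝ) ^ (-θ))⁻¹ ≤ Real.exp (c * (p : ℝ) ^ (-θ)) := by
    have hp2 : (2 : ℝ) ≤ p := by exact_mod_cast (Nat.prime_of_mem_primesBelow hp).two_le
    exact inv_one_sub_le_exp (by positivity)
      (Real.rpow_le_rpow_of_nonpos two_pos hp2 (neg_nonpos.2 hθ.le)) hτ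
  have hfactor_nonneg (p : ℕ) (hp : p ∈ N.primesBelow) : 0 ≤ (1 - (p : ℝ) ^ (-θ))⁻¹ := by
    have hp1 : (1 : ℝ) ≤ p := by exact_mod_cast (Nat.prime_of_mem_primesBelow hp).one_le
    exact inv_nonneg.2 (sub_nonneg.2 (Real.rpow_le_one_of_one_le_of_nonpos hp1 (by linarith)))
  calc ∑ d ∈ D, (d : ℝ) ^ (-θ) ≤ ∏ p ∈ N.primesBelow, (1 - (p : ℝ) ^ (-θ))⁻¹ :=
        sum_rpow_neg_le_prod_primesBelow hθ hD
    _ ≤ ∏ p ∈ N.primesBelow, Real.exp (c * (p : ℝ) ^ (-θ)) :=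
        prod_le_prod hfactor_nonneg hfactor
    _ = Real.exp (c * ∑ p ∈ N.primesBelow, (p : ℝ) ^ (-θ)) := by rw [← Real.exp_sum, ← mul_sum]
    _ ≤ Real.exp (c * ((∑' n : ℕ, (n : ℝ) ^ (-(θ + σ))) * (N : ℝ) ^ σ)) := by
      gcongr
      exact sum_primesBelow_rpow_neg_le hσ hθσ N
    _ = Real.exp (c * (∑' n : ℕ, (n : ℝ) ^ (-(θ + σ))) * (N : ℝ) ^ σ) := by rw [mul_assoc]

-- Rankin's trick: `1 ≤ (d / y) ^ δ` for `d > y`.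
lemma exists_sum_smooth_rpow_le {δ : ℝ} (hδ : 0 < δ) (hδ' : δ < 1 / 2) :
    ∃ C : ℝ, 0 ≤ C ∧ ∀ (y : ℝ), 0 < y → ∀ (N : ℕ) (D : Finset ℕ),
      (∀ d ∈ D, d ∈ N.smoothNumbers) → (∀ d ∈ D, y < d) →
      ∑ d ∈ D, (d : ℝ) ^ (δ - 1) ≤ y ^ (-δ) * Real.exp (C * (N : ℝ) ^ (3 * δ)) := by
  obtain ⟨C, hC, hsum⟩ := exists_sum_smooth_rpow_neg_le_exp (θ := 1 - 2 * δ) (σ := 3 * δ)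
    (by linarith) (by linarith) (by linarith)
  refine ⟨C, hC, fun y hy N D hD hyD ↦ ?_⟩
  have hterm (d : ℕ) (hd : d ∈ D) :
      (d : ℝ) ^ (δ - 1) ≤ y ^ (-δ) * (d : ℝ) ^ (-(1 - 2 * δ)) := by
    have hyd : y < d := hyD d hd
    calc (d : ℝ) ^ (δ - 1) = (d : ℝ) ^ (-δ) * (d : ℝ) ^ (-(1 - 2 * δ)) := by
          rw [← Real.rpow_add (hy.trans hyd)]; ring_nf
      _ ≤ y ^ (-δ) * (d : ℝ) ^ (-(1 - 2 * δ)) := by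
          gcongr ?_ * _
          exact Real.rpow_le_rpow_of_nonpos hy hyd.le (by linarith)
  calc ∑ d ∈ D, (d : ℝ) ^ (δ - 1) ≤ ∑ d ∈ D, y ^ (-δ) * (d : ℝ) ^ (-(1 - 2 * δ)) :=
        sum_le_sum hterm
    _ = y ^ (-δ) * ∑ d ∈ D, (d : ℝ) ^ (-(1 - 2 * δ)) := (mul_sum ..).symm
    _ ≤ y ^ (-δ) * Real.exp (C * (N : ℝ) ^ (3 * δ)) := by gcongr; exact hsum N D hD

lemma eventually_mul_rpow_add_mul_log_le {σ c : ℝ} (hσ : σ < 1) (hc : 0 < c) (C k : ℝ) :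
    ∀ᶠ t : ℝ in atTop, C * t ^ σ + k * Real.log t ≤ c * t := by
  have hrpow : (fun t : ℝ ↦ t ^ σ) =o[atTop] fun t ↦ t := by
    refine Asymptotics.isLittleO_of_tendsto' ((eventually_gt_atTop 0).mono fun t ht ht0 ↦
      (ht.ne' ht0).elim) ((tendsto_rpow_neg_atTop (sub_pos.2 hσ)).congr' ?_)
    filter_upwards [eventually_gt_atTop 0] with t ht
    rw [neg_sub, Real.rpow_sub_one ht.ne']
  filter_upwards [((hrpow.const_mul_left C).add
    (Real.isLittleO_log_id_atTop.const_mul_left k)).bound hc, eventually_ge_atTop 0] with t ht ht0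
  exact (le_abs_self _).trans (by simpa [abs_of_nonneg ht0] using ht)

lemma eventually_sum_smooth_rpow_le {δ : ℝ} (hδ : 0 < δ) (hδ' : δ < 1 / 2) {A : ℕ}
    (hA : 3 * δ * A < 1) (k : ℕ) :
    ∀ᶠ y : ℝ in atTop, ∀ (N : ℕ) (D : Finset ℕ), (N : ℝ) ≤ 2 * Real.log y ^ A →
      (∀ d ∈ D, d ∈ N.smoothNumbers) → (∀ d ∈ D, y < d) →
      ∑ d ∈ D, (d : ℝ) ^ (δ - 1) ≤ (Real.log y ^ k)⁻¹ := by
  obtain ⟨C, hC, hsum⟩ := exists_sum_smooth_rpow_le hδ hδ'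
  filter_upwards [eventually_gt_atTop 1, Real.tendsto_log_atTop.eventually
    (eventually_mul_rpow_add_mul_log_le (by linarith : A * (3 * δ) < 1) hδ (C * 2 ^ (3 * δ)) k)]
    with y hy hlog N D hN hD hyD
  have hL : 0 < Real.log y := Real.log_pos hy
  have hNpow : (N : ℝ) ^ (3 * δ) ≤ 2 ^ (3 * δ) * Real.log y ^ (A * (3 * δ)) := by
    calc (N : ℝ) ^ (3 * δ) ≤ (2 * Real.log y ^ A) ^ (3 * δ) := by gcongr
      _ = 2 ^ (3 * δ) * Real.log y ^ (A * (3 * δ)) := by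
        rw [Real.mul_rpow two_pos.le (by positivity), Real.rpow_mul hL.le, Real.rpow_natCast]
  have hexp : C * (N : ℝ) ^ (3 * δ) - δ * Real.log y ≤ -(k * Real.log (Real.log y)) := by
    have := mul_le_mul_of_nonneg_left hNpow hC
    linarith
  calc ∑ d ∈ D, (d : ℝ) ^ (δ - 1) ≤ y ^ (-δ) * Real.exp (C * (N : ℝ) ^ (3 * δ)) :=
        hsum y (by linarith) N D hD hyD
    _ = Real.exp (C * (N : ℝ) ^ (3 * δ) - δ * Real.log y) := by
        rw [Real.rpow_def_of_pos (by linarith), ← Real.exp_add]; ring_nf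
    _ ≤ Real.exp (-(k * Real.log (Real.log y))) := Real.exp_le_exp.2 hexp
    _ = (Real.log y ^ k)⁻¹ := by rw [Real.exp_neg, Real.exp_nat_mul, Real.exp_log hL]

end SmoothNumbers

section Counting

open Finset Filter

variable {u : ℕ → ℤ} {x y : ℝ}

lemma gu_dvd (u : ℕ → ℤ) (n : ℕ) : gu u n ∣ n :=
  Int.natCast_dvd_natCast.1 (Int.gcd_dvd_left ..)

lemma card_filter_gu_le_primePiMod_one :
    #{p ∈ primesUpTo x | y < gu u (p - 1)} ≤ primePiMod x 1 1 :=
  card_le_card fun p hp ↦ by simpa [Nat.mod_one] using (mem_filter.1 hp).1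

lemma exists_prime_dvd_or_mem_smoothNumbersUpTo {N g m : ℕ} (hgm : g ≤ m) :
    (∃ q, q.Prime ∧ N ≤ q ∧ q ∣ g) ∨ g ∈ Nat.smoothNumbersUpTo m N := by
  by_cases hsmooth : g ∈ N.smoothNumbers
  · exact .inr (Nat.mem_smoothNumbersUpTo.2 ⟨hgm, hsmooth⟩)
  · obtain ⟨q, hq, hqg, hNq⟩ : ∃ q, q.Prime ∧ q ∣ g ∧ N ≤ q := by
      simpa [Nat.mem_smoothNumbers'] using hsmooth
    exact .inl ⟨q, hq, hNq, hqg⟩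

lemma card_filter_gu_le {N : ℕ} (hx : 0 ≤ x)
    (hN : ∀ q, q.Prime → N ≤ q → ∀ n, q ∣ gu u n → ellu u q ∣ n) :
    #{p ∈ primesUpTo x | y < gu u (p - 1)} ≤
      ∑ q ∈ primesUpTo x with N ≤ q, primePiMod x (ellu u q) 1 +
        ∑ d ∈ Nat.smoothNumbersUpTo ⌊x⌋₊ N with y < (d : ℕ), primePiMod x d 1 := by
  let P (d : ℕ) : Finset ℕ := {p ∈ primesUpTo x | p % d = 1 % d}
  have hcover : {p ∈ primesUpTo x | y < gu u (p - 1)} ⊆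
      ({q ∈ primesUpTo x | N ≤ q}.biUnion fun q ↦ P (ellu u q)) ∪
        ({d ∈ Nat.smoothNumbersUpTo ⌊x⌋₊ N | y < (d : ℕ)}.biUnion P) := by
    intro p hp
    obtain ⟨hpx, hy⟩ := mem_filter.1 hp
    obtain ⟨hle, hprime⟩ := (mem_primesUpTo hx).1 hpx
    have hmem {d : ℕ} (hd : d ∣ p - 1) : p ∈ P d :=
      mem_filter.2 ⟨hpx, (mod_eq_one_mod_iff_dvd_sub_one hprime.pos).2 hd⟩
    have hpred : 0 < p - 1 := Nat.sub_pos_of_lt hprime.one_lt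
    have hgdvd := gu_dvd u (p - 1)
    have hgpos : 0 < gu u (p - 1) := Nat.pos_of_dvd_of_pos hgdvd hpred
    have hgx : gu u (p - 1) ≤ ⌊x⌋₊ :=
      (Nat.le_of_dvd hpred hgdvd).trans ((Nat.sub_le p 1).trans (Nat.le_floor hle))
    rcases exists_prime_dvd_or_mem_smoothNumbersUpTo (N := N) hgx with
      ⟨q, hq, hNq, hqg⟩ | hsmooth
    · have hqx : (q : ℝ) ≤ x := (Nat.cast_le.2 (Nat.le_of_dvd hgpos hqg)).trans
        ((Nat.le_floor_iff hx).1 hgx)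
      exact mem_union_left _ (mem_biUnion.2
        ⟨q, mem_filter.2 ⟨(mem_primesUpTo hx).2 ⟨hqx, hq⟩, hNq⟩, hmem (hN q hq hNq _ hqg)⟩)
    · exact mem_union_right _ (mem_biUnion.2 ⟨_, mem_filter.2 ⟨hsmooth, hy⟩, hmem hgdvd⟩)
  exact (card_le_card hcover).trans <|
    (card_union_le _ _).trans (add_le_add card_biUnion_le card_biUnion_le)

lemma card_filter_gu_le_mul_sum_rpow {N : ℕ} {K r : ℝ} (hx : 0 ≤ x)
    (hK : ∀ d, (primePiMod x d 1 : ℝ) ≤ K * (d : ℝ) ^ r)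
    (hN : ∀ q, q.Prime → N ≤ q → ∀ n, q ∣ gu u n → ellu u q ∣ n) :
    (#{p ∈ primesUpTo x | y < gu u (p - 1)} : ℝ) ≤
      K * (∑ q ∈ primesUpTo x with N ≤ q, (ellu u q : ℝ) ^ r +
        ∑ d ∈ Nat.smoothNumbersUpTo ⌊x⌋₊ N with y < (d : ℕ), (d : ℝ) ^ r) := by
  calc (#{p ∈ primesUpTo x | y < gu u (p - 1)} : ℝ)
      ≤ ∑ q ∈ primesUpTo x with N ≤ q, (primePiMod x (ellu u q) 1 : ℝ) +
          ∑ d ∈ Nat.smoothNumbersUpTo ⌊x⌋₊ N with y < (d : ℕ), (primePiMod x d 1 : ℝ) := by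
        exact_mod_cast card_filter_gu_le hx hN
    _ ≤ ∑ q ∈ primesUpTo x with N ≤ q, K * (ellu u q : ℝ) ^ r +
          ∑ d ∈ Nat.smoothNumbersUpTo ⌊x⌋₊ N with y < (d : ℕ), K * (d : ℝ) ^ r :=
        add_le_add (sum_le_sum fun q _ ↦ hK (ellu u q)) (sum_le_sum fun d _ ↦ hK d)
    _ = _ := by rw [mul_add, mul_sum, mul_sum]

lemma exists_forall_le_of_eventually_le {ι : Type*} {f : ι → ℝ → ℝ} {M : ι → ℝ} {B C : ℝ} {k : ℕ}
    (hM : ∀ i, 0 ≤ M i) (hB : 0 < B)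
    (hle : ∀ i y, f i y ≤ B * M i)
    (hev : ∀ᶠ y in atTop, ∀ i, f i y ≤ C * M i * (Real.log y ^ k)⁻¹) :
    ∃ C' : ℝ, 0 < C' ∧ ∀ i y, 1 < y → f i y ≤ C' * M i * (Real.log y ^ k)⁻¹ := by
  obtain ⟨y₀, hy₀⟩ := eventually_atTop.1 hev
  have hlog₀ : 0 < Real.log (max y₀ 2) := Real.log_pos (by simp)
  refine ⟨max C (B * Real.log (max y₀ 2) ^ k), lt_max_of_lt_right (by positivity),
    fun i y hy ↦ ?_⟩
  have hlog : 0 < Real.log y := Real.log_pos hy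
  have hMi := hM i
  rcases le_total y₀ y with hlarge | hsmall
  · exact (hy₀ y hlarge i).trans (by gcongr; exact le_max_left _ _)
  · have hone : 1 ≤ Real.log (max y₀ 2) ^ k * (Real.log y ^ k)⁻¹ := by
      rw [← div_eq_mul_inv, one_le_div (by positivity)]
      gcongr
      exact hsmall.trans (le_max_left _ _)
    calc f i y ≤ B * M i * 1 := by rw [mul_one]; exact hle i y
      _ ≤ B * M i * (Real.log (max y₀ 2) ^ k * (Real.log y ^ k)⁻¹) := by gcongr
      _ = B * Real.log (max y₀ 2) ^ k * M i * (Real.log y ^ k)⁻¹ := by ring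
      _ ≤ _ := by gcongr; exact le_max_right _ _

lemma exists_natCast_rpow_neg_le_and_le {t : ℝ} (ht : 1 ≤ t) (k : ℕ) :
    ∃ N : ℕ, t ≤ N ∧ (N : ℝ) ≤ 2 * t ^ (4 * (k + 1)) ∧ (N : ℝ) ^ (-(1 / 4) : ℝ) ≤ (t ^ k)⁻¹ := by
  have ht0 : 0 < t := zero_lt_one.trans_le ht
  set T := t ^ (4 * (k + 1)) with hT
  have hT1 : 1 ≤ T := one_le_pow₀ ht
  have hle : T ≤ ⌈T⌉₊ := Nat.le_ceil T
  refine ⟨⌈T⌉₊, (le_self_pow₀ ht (by omega)).trans hle, ?_, ?_⟩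
  · linarith [Nat.ceil_lt_add_one (zero_le_one.trans hT1)]
  · calc (⌈T⌉₊ : ℝ) ^ (-(1 / 4) : ℝ) ≤ T ^ (-(1 / 4) : ℝ) :=
          Real.rpow_le_rpow_of_nonpos (by positivity) hle (by norm_num)
      _ = (t ^ (k + 1))⁻¹ := by
          rw [hT, ← Real.rpow_natCast, ← Real.rpow_mul ht0.le, ← Real.rpow_natCast,
            ← Real.rpow_neg ht0.le]
          push_cast
          ring_nf
      _ ≤ (t ^ k)⁻¹ := by
          gcongr
          exact k.le_succ

lemma IsLucasSeq.exists_eventually_card_filter_gu_le {a b : ℤ} (h : IsLucasSeq a b u) (hb : b ≠ 0)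
    (hΔ : a ^ 2 + 4 * b ≠ 0) (hu : ∀ n, 0 < n → u n ≠ 0) (k : ℕ) :
    ∃ C : ℝ, ∀ᶠ y : ℝ in atTop, ∀ x : ℝ, 1 < x →
      (#{p ∈ primesUpTo x | y < gu u (p - 1)} : ℝ) ≤
        C * (x / Real.log x) * (Real.log y ^ k)⁻¹ := by
  -- With `N ≈ (log y) ^ A` the smooth part requires `3 * δ * A < 1`, and the large primes require
  -- `A * ε ≥ k` and `1 - δ - ε > 2 / 3`. We take `A = 4 * (k + 1)`, `ε = 1 / 4`, `δ * A = 1 / 4`.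
  obtain ⟨δ, hδ, hδA, hδ'⟩ : ∃ δ : ℝ, 0 < δ ∧ δ * (4 * (k + 1) : ℕ) = 1 / 4 ∧ δ ≤ 1 / 16 := by
    refine ⟨(16 * (k + 1))⁻¹, by positivity, by push_cast; field_simp; norm_num, ?_⟩
    rw [one_div]
    gcongr
    linarith [(Nat.cast_nonneg k : (0 : ℝ) ≤ k)]
  obtain ⟨C, hC, hprog⟩ := exists_primePiMod_one_le hδ
  obtain ⟨B, hB, htail⟩ := h.exists_sum_ellu_rpow_tail_le hb hΔ hu (s := 3 / 4 - δ) (ε := 1 / 4)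
    (by linarith) (by norm_num)
  refine ⟨C * (B + 1), ?_⟩
  set M := b * (a ^ 2 + 4 * b)
  filter_upwards [eventually_sum_smooth_rpow_le hδ (by linarith)
      (by linarith : 3 * δ * (4 * (k + 1) : ℕ) < 1) k,
    Real.tendsto_log_atTop.eventually_ge_atTop (M.natAbs + 1)] with y hsmooth hlogy x hx
  have hlogx : 0 < Real.log x := Real.log_pos hx
  obtain ⟨N, hlogN, hN_le, hN_rpow⟩ := exists_natCast_rpow_neg_le_and_le (t := Real.log y)
    (by linarith [(Nat.cast_nonneg _ : (0 : ℝ) ≤ M.natAbs)]) k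
  have hMN : M.natAbs < N := by exact_mod_cast hlogy.trans hlogN
  have hlarge : ∑ q ∈ primesUpTo x with N ≤ q, (ellu u q : ℝ) ^ (δ - 1) ≤
      B * (Real.log y ^ k)⁻¹ := by
    rw [show δ - 1 = -(3 / 4 - δ + 1 / 4) by ring]
    exact (htail N hMN _ (fun q hq ↦ ((mem_primesUpTo (by linarith)).1 (mem_filter.1 hq).1).2)
      fun q hq ↦ (mem_filter.1 hq).2).trans (by gcongr)
  have hsmall : ∑ d ∈ Nat.smoothNumbersUpTo ⌊x⌋₊ N with y < (d : ℕ), (d : ℝ) ^ (δ - 1) ≤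
      (Real.log y ^ k)⁻¹ :=
    hsmooth N _ hN_le (fun d hd ↦ (Nat.mem_smoothNumbersUpTo.1 (mem_filter.1 hd).1).2)
      fun d hd ↦ (mem_filter.1 hd).2
  calc (#{p ∈ primesUpTo x | y < gu u (p - 1)} : ℝ)
      ≤ C * (x / Real.log x) * (∑ q ∈ primesUpTo x with N ≤ q, (ellu u q : ℝ) ^ (δ - 1) +
          ∑ d ∈ Nat.smoothNumbersUpTo ⌊x⌋₊ N with y < (d : ℕ), (d : ℝ) ^ (δ - 1)) :=
        card_filter_gu_le_mul_sum_rpow (by linarith) (hprog x hx) fun q hq hNq n ↦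
          h.ellu_dvd_of_dvd_gu hq <|
            natCast_not_dvd_of_natAbs_lt (mul_ne_zero hb hΔ) (hMN.trans_le hNq)
    _ ≤ C * (x / Real.log x) * (B * (Real.log y ^ k)⁻¹ + (Real.log y ^ k)⁻¹) := by gcongr
    _ = C * (B + 1) * (x / Real.log x) * (Real.log y ^ k)⁻¹ := by ring

theorem statement5_general {a b : ℤ} (hb : b ≠ 0) (hΔ : a ^ 2 + 4 * b ≠ 0)
    (h : IsLucasSeq a b u) (hu : ∀ n, 0 < n → u n ≠ 0) (k : ℕ) :
    ∃ C : ℝ, 0 < C ∧ ∀ x y : ℝ, 1 < x → 1 < y →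
      (((primesUpTo x).filter fun p => y < (gu u (p - 1) : ℝ)).card : ℝ) ≤
        C * x / (Real.log y ^ k * Real.log x) := by
  obtain ⟨C, hev⟩ := h.exists_eventually_card_filter_gu_le hb hΔ hu k
  obtain ⟨B, hB, hprog⟩ := exists_primePiMod_one_le one_pos
  obtain ⟨C', hC', hle⟩ := exists_forall_le_of_eventually_le (ι := {x : ℝ // 1 < x})
    (f := fun x y ↦ #{p ∈ primesUpTo x | y < gu u (p - 1)}) (M := fun x ↦ x / Real.log x)
    (fun x ↦ div_nonneg (by linarith [x.2]) (Real.log_pos x.2).le) hB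
    (fun x y ↦ (Nat.cast_le.2 card_filter_gu_le_primePiMod_one).trans
      (by simpa using hprog x x.2 1))
    (hev.mono fun y hy x ↦ hy x x.2)
  refine ⟨C', hC', fun x y hx hy ↦ (hle ⟨x, hx⟩ y hy).trans_eq ?_⟩
  field_simp

end Counting

/-- For every positive integer `λ` there is `C > 0` such that for all
`x, y > 1` the number of primes `p ≤ x` with `g_u(p−1) > y` is at most
`C·x/((log y)^λ·log x)`. -/
theorem statement5 (a₁ a₂ : ℤ) (hcop : IsCoprime a₁ a₂) (ha₂ : a₂ ≠ 0)
    (hΔ : a₁ ^ 2 + 4 * a₂ ≠ 0)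
    (u : ℕ → ℤ) (hu0 : u 0 = 0) (hu1 : u 1 = 1)
    (hrec : ∀ n : ℕ, u (n + 2) = a₁ * u (n + 1) + a₂ * u n)
    (hnd : ∀ α β : ℂ, α ^ 2 = (a₁ : ℂ) * α + (a₂ : ℂ) →
      β ^ 2 = (a₁ : ℂ) * β + (a₂ : ℂ) → α ≠ β → ∀ k : ℕ, 0 < k → (α / β) ^ k ≠ 1)
    (lam : ℕ) (hlam : 0 < lam) :
    ∃ C : ℝ, 0 < C ∧ ∀ x y : ℝ, 1 < x → 1 < y →
      (((primesUpTo x).filter fun p => y < (gu u (p - 1) : ℝ)).card : ℝ) ≤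
        C * x / (Real.log y ^ lam * Real.log x) := by
  have h : IsLucasSeq a₁ a₂ u := ⟨hu0, hu1, hrec⟩
  exact statement5_general ha₂ hΔ h (fun _ ↦ h.ne_zero_of_nondegenerate ha₂ hΔ hnd) lam
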